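/- Let d ≥ 2, let p be a symmetric probability mass function on ℤ with ψ(s) := Σ_{j∈ℤ} e^{sj} p(j) < ∞ for all s ∈ (−R, R), R > 0, and let H be the almost-sure limit of the spherical averages H_r of the free height field with increment law p on the rooted Cayley tree of order d. Then for every A with 0 < A < (d+1)R there exists a constant B = B(A) < ∞ such that P(|H| ≥ s) ≤ B e^{−As} for all real s ≥ 0. -/

import Mathlib

open MeasureTheory ProbabilityTheory Filter Finset Topology

noncomputable section

/-- A non-root vertex of the rooted Cayley tree of order `d`: the first step from the
root is one of `d+1` children, every further step one of `d` children. -/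
abbrev Vertex (d : ℕ) : Type := Fin (d + 1) × List (Fin d)

/-- depth of a non-root vertex -/
def vdepth {d : ℕ} (v : Vertex d) : ℕ := v.2.length + 1

/-- the sphere `W_r` of radius `r ≥ 1`: all vertices of depth `r` -/
def sphereW (d r : ℕ) : Finset (Vertex d) :=
  (Finset.univ : Finset (Fin (d + 1) × (Fin (r - 1) → Fin d))).image
    (fun x => (x.1, List.ofFn x.2))

/-- height at `v`: sum of the increments along the path from the root to `v`
(the prefixes of length `0,…,|v.2|` of the step list of `v` enumerate that path). -/
def heightAt {d : ℕ} {Ω : Type*} (Y : Vertex d → Ω → ℝ) (v : Vertex d) (ω : Ω) : ℝ :=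
  ∑ k ∈ Finset.range (v.2.length + 1), Y (v.1, v.2.take k) ω

/-- spherical average `H_r` of the heights at depth `r` -/
def sphAvg (d : ℕ) {Ω : Type*} (Y : Vertex d → Ω → ℝ) (r : ℕ) (ω : Ω) : ℝ :=
  (((d + 1) * d ^ (r - 1) : ℕ) : ℝ)⁻¹ * ∑ v ∈ sphereW d r, heightAt Y v ω

/-!
`H_r` is a linear combination of the increments in which one at depth `k` has weight
`1 / |W_k| ≤ 1 / (d + 1)`, and the squared weights have a sum bounded in `r`. A centred law with
exponential moments on `(-R, R)` has moment generating function at most `exp (C t ^ 2)` on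
`[-a, a]` for every `a < R`. By independence `E exp (t H_r) ≤ exp (2 C t ^ 2)` for
`|t| ≤ (d + 1) a`, uniformly in `r`; Fatou's lemma passes this to `H`, and Chernoff's bound at
`t = ±A` with `a = A / (d + 1)` gives the tail.
-/

section SubexponentialMGF

variable {Ω ι : Type*} {mΩ : MeasurableSpace Ω} {μ : Measure Ω} {X : Ω → ℝ} {C a : ℝ}

/-- A sub-exponential random variable: its moment generating function is finite and dominated by
the Gaussian one `exp (C t ^ 2)`, but only for `|t| ≤ a`. It is the local counterpart of
`HasSubgaussianMGF` (whose parameter is normalised differently, as `c t ^ 2 / 2`). -/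
structure HasSubexponentialMGF (X : Ω → ℝ) (C a : ℝ) (μ : Measure Ω) : Prop where
  integrable_exp_mul : ∀ t : ℝ, |t| ≤ a → Integrable (fun ω => Real.exp (t * X ω)) μ
  mgf_le : ∀ t : ℝ, |t| ≤ a → mgf X μ t ≤ Real.exp (C * t ^ 2)

theorem exp_le_one_add_add_sq_mul_exp_abs (x : ℝ) :
    Real.exp x ≤ 1 + x + x ^ 2 * Real.exp |x| := by
  have hC := Complex.norm_exp_sub_sum_le_norm_mul_exp x 2
  have hR : |Real.exp x - (1 + x)| ≤ x ^ 2 * Real.exp |x| := by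
    rw [← Real.norm_eq_abs, ← Complex.norm_real]
    simpa [Finset.sum_range_succ] using hC
  linarith [le_abs_self (Real.exp x - (1 + x))]

theorem mgf_le_exp_of_integral_eq_zero [IsProbabilityMeasure μ] (hX : Integrable X μ)
    (hmean : ∫ ω, X ω ∂μ = 0) (hX2 : Integrable (fun ω => X ω ^ 2 * Real.exp (a * |X ω|)) μ)
    {t : ℝ} (ht : |t| ≤ a) (hexp : Integrable (fun ω => Real.exp (t * X ω)) μ) :
    mgf X μ t ≤ Real.exp ((∫ ω, X ω ^ 2 * Real.exp (a * |X ω|) ∂μ) * t ^ 2) := by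
  have hpointwise (ω : Ω) :
      Real.exp (t * X ω) ≤ 1 + t * X ω + t ^ 2 * (X ω ^ 2 * Real.exp (a * |X ω|)) := by
    calc Real.exp (t * X ω)
        ≤ 1 + t * X ω + (t * X ω) ^ 2 * Real.exp |t * X ω| :=
          exp_le_one_add_add_sq_mul_exp_abs _
      _ ≤ 1 + t * X ω + (t * X ω) ^ 2 * Real.exp (a * |X ω|) := by
          rw [abs_mul]
          gcongr
      _ = _ := by ring
  have hlin : Integrable (fun ω => 1 + t * X ω) μ := (integrable_const 1).add (hX.const_mul t)
  calc mgf X μ t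
      ≤ ∫ ω, (1 + t * X ω + t ^ 2 * (X ω ^ 2 * Real.exp (a * |X ω|))) ∂μ :=
        integral_mono hexp (hlin.add (hX2.const_mul _)) hpointwise
    _ = (∫ ω, X ω ^ 2 * Real.exp (a * |X ω|) ∂μ) * t ^ 2 + 1 := by
        rw [integral_add hlin (hX2.const_mul _), integral_add (integrable_const 1)
          (hX.const_mul t), integral_const_mul, integral_const_mul, hmean]
        simp only [integral_const, probReal_univ, smul_eq_mul]
        ring
    _ ≤ _ := Real.add_one_le_exp _

theorem exists_hasSubexponentialMGF_of_integral_eq_zero [IsProbabilityMeasure μ]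
    (hmean : ∫ ω, X ω ∂μ = 0) {R : ℝ} (hR : Set.Ioo (-R) R ⊆ integrableExpSet X μ)
    (ha : 0 ≤ a) (haR : a < R) : ∃ C, 0 ≤ C ∧ HasSubexponentialMGF X C a μ := by
  obtain ⟨b, hab, hbR⟩ := exists_between haR
  have hb : 0 < b := ha.trans_lt hab
  have hexp {t : ℝ} (ht : |t| < R) : Integrable (fun ω => Real.exp (t * X ω)) μ :=
    hR (abs_lt.1 ht)
  have hpos := hexp (t := b) (by rwa [abs_of_pos hb])
  have hneg := hexp (t := -b) (by rwa [abs_neg, abs_of_pos hb])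
  have hX : Integrable X μ := by
    simpa using integrable_pow_of_integrable_exp_mul hb.ne' hpos hneg 1
  have hX2 : Integrable (fun ω => X ω ^ 2 * Real.exp (a * |X ω|)) μ := by
    simpa using integrable_pow_abs_mul_exp_add_of_integrable_exp_mul (v := 0) (t := b)
      (by simpa using hpos) (by simpa using hneg) ha (by rwa [abs_of_pos hb]) 2
  exact ⟨∫ ω, X ω ^ 2 * Real.exp (a * |X ω|) ∂μ, by positivity,
    fun t ht => hexp (ht.trans_lt haR),
    fun t ht => mgf_le_exp_of_integral_eq_zero hX hmean hX2 ht (hexp (ht.trans_lt haR))⟩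

theorem integrable_and_integral_norm_le_of_tendsto_ae {E : Type*} [NormedAddCommGroup E]
    {F : ℕ → Ω → E} {f : Ω → E} {M : ℝ} (hF : ∀ n, Integrable (F n) μ)
    (hM : ∀ n, ∫ ω, ‖F n ω‖ ∂μ ≤ M)
    (hf : ∀ᵐ ω ∂μ, Tendsto (fun n => F n ω) atTop (𝓝 (f ω))) :
    Integrable f μ ∧ ∫ ω, ‖f ω‖ ∂μ ≤ M := by
  have hlintegral : ∫⁻ ω, ‖f ω‖ₑ ∂μ ≤ ENNReal.ofReal M :=
    calc ∫⁻ ω, ‖f ω‖ₑ ∂μ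
        = ∫⁻ ω, liminf (fun n => ‖F n ω‖ₑ) atTop ∂μ :=
          lintegral_congr_ae (hf.mono fun ω hω => hω.enorm.liminf_eq.symm)
      _ ≤ liminf (fun n => ∫⁻ ω, ‖F n ω‖ₑ ∂μ) atTop :=
          lintegral_liminf_le' fun n => (hF n).aestronglyMeasurable.enorm
      _ ≤ ENNReal.ofReal M := by
          refine liminf_le_of_frequently_le' (.of_forall fun n => ?_)
          rw [← ofReal_integral_norm_eq_lintegral_enorm (hF n)]
          exact ENNReal.ofReal_le_ofReal (hM n)
  have hint : Integrable f μ :=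
    ⟨aestronglyMeasurable_of_tendsto_ae atTop (fun n => (hF n).aestronglyMeasurable) hf,
      hlintegral.trans_lt ENNReal.ofReal_lt_top⟩
  have hM0 : 0 ≤ M := (integral_nonneg fun ω => norm_nonneg (F 0 ω)).trans (hM 0)
  rw [← ofReal_integral_norm_eq_lintegral_enorm hint, ENNReal.ofReal_le_ofReal_iff hM0]
    at hlintegral
  exact ⟨hint, hlintegral⟩

namespace HasSubexponentialMGF

theorem mono {C' : ℝ} (h : HasSubexponentialMGF X C a μ) (hC : C ≤ C') :
    HasSubexponentialMGF X C' a μ where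
  integrable_exp_mul := h.integrable_exp_mul
  mgf_le t ht := (h.mgf_le t ht).trans (by gcongr)

theorem const_mul {b w : ℝ} (h : HasSubexponentialMGF X C a μ) (hw : |w| * b ≤ a) :
    HasSubexponentialMGF (fun ω => w * X ω) (C * w ^ 2) b μ := by
  have habs {t : ℝ} (ht : |t| ≤ b) : |w * t| ≤ a :=
    calc |w * t| = |w| * |t| := abs_mul w t
      _ ≤ |w| * b := by gcongr
      _ ≤ a := hw
  refine ⟨fun t ht => ?_, fun t ht => ?_⟩
  · simpa only [mul_assoc, mul_left_comm] using h.integrable_exp_mul _ (habs ht)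
  · rw [mgf_const_mul]
    simpa only [mul_pow, mul_assoc] using h.mgf_le _ (habs ht)

theorem sum {X : ι → Ω → ℝ} {C : ι → ℝ} (hindep : iIndepFun X μ)
    (hmeas : ∀ i, AEMeasurable (X i) μ) {s : Finset ι}
    (h : ∀ i ∈ s, HasSubexponentialMGF (X i) (C i) a μ) :
    HasSubexponentialMGF (∑ i ∈ s, X i) (∑ i ∈ s, C i) a μ := by
  have : IsProbabilityMeasure μ := hindep.isProbabilityMeasure
  refine ⟨fun t ht => .of_integral_ne_zero ?_, fun t ht => ?_⟩
  · change mgf (∑ i ∈ s, X i) μ t ≠ 0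
    rw [hindep.mgf_sum₀ hmeas]
    exact (Finset.prod_pos fun i hi => mgf_pos ((h i hi).integrable_exp_mul t ht)).ne'
  · rw [hindep.mgf_sum₀ hmeas, Finset.sum_mul, Real.exp_sum]
    exact Finset.prod_le_prod (fun i _ => mgf_nonneg) fun i hi => (h i hi).mgf_le t ht

theorem of_tendsto_ae {X : ℕ → Ω → ℝ} {Z : Ω → ℝ}
    (h : ∀ n, HasSubexponentialMGF (X n) C a μ)
    (hZ : ∀ᵐ ω ∂μ, Tendsto (fun n => X n ω) atTop (𝓝 (Z ω))) :
    HasSubexponentialMGF Z C a μ := by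
  have hfatou (t : ℝ) (ht : |t| ≤ a) :=
    integrable_and_integral_norm_le_of_tendsto_ae (M := Real.exp (C * t ^ 2))
      (fun n => (h n).integrable_exp_mul t ht)
      (fun n => by simpa only [Real.norm_eq_abs, Real.abs_exp, mgf] using (h n).mgf_le t ht)
      (hZ.mono fun ω hω => (Real.continuous_exp.tendsto _).comp (hω.const_mul t))
  refine ⟨fun t ht => (hfatou t ht).1, fun t ht => ?_⟩
  simpa only [Real.norm_eq_abs, Real.abs_exp, mgf] using (hfatou t ht).2

theorem of_hasLaw {ν : Measure ℝ} (h : HasSubexponentialMGF id C a ν) (hX : HasLaw X ν μ) :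
    HasSubexponentialMGF X C a μ := by
  obtain ⟨hX, rfl⟩ := hX
  refine ⟨fun t ht => ?_, fun t ht => ?_⟩
  · exact (integrable_map_measure (by fun_prop) hX).1 (h.integrable_exp_mul t ht)
  · rw [← mgf_id_map hX]
    exact h.mgf_le t ht

theorem measureReal_abs_ge_le [IsFiniteMeasure μ] (h : HasSubexponentialMGF X C a μ)
    (ha : 0 ≤ a) (s : ℝ) :
    μ.real {ω | s ≤ |X ω|} ≤ 2 * Real.exp (C * a ^ 2) * Real.exp (-a * s) := by
  have hpos : |a| ≤ a := (abs_of_nonneg ha).le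
  have hneg : |-a| ≤ a := by rwa [abs_neg]
  have hupper : μ.real {ω | s ≤ X ω} ≤ Real.exp (-a * s) * Real.exp (C * a ^ 2) :=
    (measure_ge_le_exp_mul_mgf s ha (h.integrable_exp_mul a hpos)).trans <| by
      gcongr
      exact h.mgf_le a hpos
  have hlower : μ.real {ω | X ω ≤ -s} ≤ Real.exp (-a * s) * Real.exp (C * a ^ 2) :=
    (measure_le_le_exp_mul_mgf (-s) (neg_nonpos.2 ha) (h.integrable_exp_mul (-a) hneg)).trans <| by
      rw [neg_mul_neg, neg_mul]
      gcongr
      simpa only [neg_sq] using h.mgf_le (-a) hneg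
  calc μ.real {ω | s ≤ |X ω|} = μ.real ({ω | X ω ≤ -s} ∪ {ω | s ≤ X ω}) := by
        simp only [le_abs', Set.ofPred_or]
    _ ≤ μ.real {ω | X ω ≤ -s} + μ.real {ω | s ≤ X ω} := measureReal_union_le _ _
    _ ≤ 2 * Real.exp (C * a ^ 2) * Real.exp (-a * s) := by linarith

end HasSubexponentialMGF

end SubexponentialMGF

section CayleyTree

variable {d : ℕ}

theorem sum_sphereW {M : Type*} [AddCommMonoid M] (r : ℕ) (f : Vertex d → M) :
    ∑ v ∈ sphereW d r, f v =
      ∑ i : Fin (d + 1), ∑ g : Fin (r - 1) → Fin d, f (i, List.ofFn g) := by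
  rw [sphereW, Finset.sum_image, Fintype.sum_prod_type]
  exact (Function.injective_id.prodMap List.ofFn_injective).injOn

theorem card_sphereW (d r : ℕ) : #(sphereW d r) = (d + 1) * d ^ (r - 1) := by
  rw [Finset.card_eq_sum_ones, sum_sphereW]
  simp

theorem vdepth_of_mem_sphereW {r : ℕ} {v : Vertex d} (hv : v ∈ sphereW d (r + 1)) :
    vdepth v = r + 1 := by
  obtain ⟨x, -, rfl⟩ := Finset.mem_image.1 hv
  simp [vdepth]

/-- The `a`-th child of a non-root vertex. -/
def child (v : Vertex d) (a : Fin d) : Vertex d := (v.1, v.2 ++ [a])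

theorem sum_sphereW_succ {M : Type*} [AddCommMonoid M] (r : ℕ) (f : Vertex d → M) :
    ∑ v ∈ sphereW d (r + 2), f v = ∑ v ∈ sphereW d (r + 1), ∑ a, f (child v a) := by
  have ofFn_snoc (x : Fin d × (Fin r → Fin d)) :
      List.ofFn (Fin.snocEquiv (fun _ => Fin d) x) = List.ofFn x.2 ++ [x.1] := by
    rw [List.ofFn_succ_last]
    simp [Fin.snocEquiv]
  rw [sum_sphereW, sum_sphereW]
  refine Finset.sum_congr rfl fun i _ => ?_
  change ∑ g : Fin (r + 1) → Fin d, _ = ∑ g : Fin r → Fin d, _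
  rw [← (Fin.snocEquiv fun _ => Fin d).sum_comp, Fintype.sum_prod_type_right]
  simp only [ofFn_snoc, child]

variable {Ω : Type*} (Y : Vertex d → Ω → ℝ)

theorem heightAt_child (v : Vertex d) (a : Fin d) (ω : Ω) :
    heightAt Y (child v a) ω = heightAt Y v ω + Y (child v a) ω := by
  simp only [heightAt, child, List.length_append, List.length_singleton]
  rw [Finset.sum_range_succ, List.take_of_length_le (by simp)]
  congr 1
  refine Finset.sum_congr rfl fun k hk => ?_
  rw [List.take_append_of_le_length (Nat.lt_succ_iff.1 (Finset.mem_range.1 hk))]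

theorem sum_heightAt_sphereW_succ (r : ℕ) (ω : Ω) :
    ∑ v ∈ sphereW d (r + 2), heightAt Y v ω =
      d * ∑ v ∈ sphereW d (r + 1), heightAt Y v ω + ∑ v ∈ sphereW d (r + 2), Y v ω := by
  simp only [sum_sphereW_succ, heightAt_child, Finset.sum_add_distrib, Finset.sum_const,
    Finset.card_univ, Fintype.card_fin, nsmul_eq_mul, Finset.mul_sum]

theorem sphAvg_one (ω : Ω) :
    sphAvg d Y 1 ω = (#(sphereW d 1) : ℝ)⁻¹ * ∑ v ∈ sphereW d 1, Y v ω := by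
  rw [sphAvg, card_sphereW, sum_sphereW, sum_sphereW]
  simp [heightAt]

theorem sphAvg_succ (hd : d ≠ 0) (r : ℕ) (ω : Ω) :
    sphAvg d Y (r + 2) ω =
      sphAvg d Y (r + 1) ω + (#(sphereW d (r + 2)) : ℝ)⁻¹ * ∑ v ∈ sphereW d (r + 2), Y v ω := by
  rw [sphAvg, sphAvg, sum_heightAt_sphereW_succ, card_sphereW]
  simp only [Nat.add_sub_cancel, show r + 2 - 1 = r + 1 from rfl]
  push_cast
  field_simp
  ring

/-- The weight `1 / |W_r|` that the spherical averages give to the increment at a vertex of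
depth `r`. -/
def sphereWeight (v : Vertex d) : ℝ := (#(sphereW d (vdepth v)) : ℝ)⁻¹

/-- The non-root vertices of depth at most `r`. -/
def ballW (d r : ℕ) : Finset (Vertex d) := (Finset.range r).biUnion fun k => sphereW d (k + 1)

theorem sphereWeight_nonneg (v : Vertex d) : 0 ≤ sphereWeight v := by
  unfold sphereWeight
  positivity

theorem sphereWeight_le (hd : d ≠ 0) (v : Vertex d) : sphereWeight v ≤ ((d : ℝ) + 1)⁻¹ := by
  rw [sphereWeight, card_sphereW]
  push_cast
  exact inv_anti₀ (by positivity) (le_mul_of_one_le_right (by positivity)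
    (one_le_pow₀ (by exact_mod_cast Nat.one_le_iff_ne_zero.2 hd)))

theorem sphereWeight_of_mem_sphereW {r : ℕ} {v : Vertex d} (hv : v ∈ sphereW d (r + 1)) :
    sphereWeight v = (#(sphereW d (r + 1)) : ℝ)⁻¹ := by
  rw [sphereWeight, vdepth_of_mem_sphereW hv]

theorem sum_ballW {M : Type*} [AddCommMonoid M] (r : ℕ) (f : Vertex d → M) :
    ∑ v ∈ ballW d r, f v = ∑ k ∈ Finset.range r, ∑ v ∈ sphereW d (k + 1), f v := by
  refine Finset.sum_biUnion fun j _ k _ hjk => Finset.disjoint_left.2 fun v hj hk => hjk ?_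
  exact Nat.succ_injective ((vdepth_of_mem_sphereW hj).symm.trans (vdepth_of_mem_sphereW hk))

theorem sphAvg_eq_sum_ballW (hd : d ≠ 0) (r : ℕ) (ω : Ω) :
    sphAvg d Y (r + 1) ω = ∑ v ∈ ballW d (r + 1), sphereWeight v * Y v ω := by
  have hsphere (k : ℕ) : ∑ v ∈ sphereW d (k + 1), sphereWeight v * Y v ω =
      (#(sphereW d (k + 1)) : ℝ)⁻¹ * ∑ v ∈ sphereW d (k + 1), Y v ω := by
    rw [Finset.mul_sum]
    exact Finset.sum_congr rfl fun v hv => by rw [sphereWeight_of_mem_sphereW hv]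
  rw [sum_ballW]
  induction r with
  | zero => rw [Finset.sum_range_one, hsphere, sphAvg_one]
  | succ r ih => rw [Finset.sum_range_succ, ← ih, hsphere, sphAvg_succ Y hd]

theorem sum_sphereW_sphereWeight_sq (r : ℕ) :
    ∑ v ∈ sphereW d (r + 1), sphereWeight v ^ 2 = (#(sphereW d (r + 1)) : ℝ)⁻¹ := by
  rw [Finset.sum_congr rfl fun v hv => by rw [sphereWeight_of_mem_sphereW hv],
    Finset.sum_const, nsmul_eq_mul]
  field_simp

theorem sum_ballW_sphereWeight_sq_le (hd : 2 ≤ d) (r : ℕ) :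
    ∑ v ∈ ballW d r, sphereWeight v ^ 2 ≤ 2 := by
  have hd' : (2 : ℝ) ≤ d := by exact_mod_cast hd
  calc ∑ v ∈ ballW d r, sphereWeight v ^ 2
      = ∑ k ∈ Finset.range r, (#(sphereW d (k + 1)) : ℝ)⁻¹ := by
        simp only [sum_ballW, sum_sphereW_sphereWeight_sq]
    _ ≤ ∑ k ∈ Finset.range r, (1 / 2 : ℝ) ^ k := by
        refine Finset.sum_le_sum fun k _ => ?_
        rw [card_sphereW, Nat.add_sub_cancel, one_div, inv_pow]
        push_cast
        refine inv_anti₀ (by positivity) ?_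
        calc (2 : ℝ) ^ k ≤ (d : ℝ) ^ k := by gcongr
          _ ≤ ((d : ℝ) + 1) * (d : ℝ) ^ k := le_mul_of_one_le_left (by positivity) (by linarith)
    _ ≤ 2 := sum_geometric_two_le r

end CayleyTree

theorem hasSubexponentialMGF_sphAvg {Ω : Type*} {mΩ : MeasurableSpace Ω} {P : Measure Ω} {d : ℕ}
    (hd : 2 ≤ d) {Y : Vertex d → Ω → ℝ} (hmeas : ∀ v, AEMeasurable (Y v) P)
    (hindep : iIndepFun Y P) {C a : ℝ} (hC : 0 ≤ C) (ha : 0 ≤ a)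
    (hY : ∀ v, HasSubexponentialMGF (Y v) C a P) (r : ℕ) :
    HasSubexponentialMGF (sphAvg d Y (r + 1)) (C * 2) (((d : ℝ) + 1) * a) P := by
  have hd0 : d ≠ 0 := by lia
  have hweighted (v : Vertex d) : HasSubexponentialMGF (fun ω => sphereWeight v * Y v ω)
      (C * sphereWeight v ^ 2) (((d : ℝ) + 1) * a) P := by
    refine (hY v).const_mul ?_
    calc |sphereWeight v| * (((d : ℝ) + 1) * a)
        ≤ ((d : ℝ) + 1)⁻¹ * (((d : ℝ) + 1) * a) := by
          rw [abs_of_nonneg (sphereWeight_nonneg v)]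
          gcongr
          exact sphereWeight_le hd0 v
      _ = a := inv_mul_cancel_left₀ (by positivity) a
  have hsum := HasSubexponentialMGF.sum
    (hindep.comp (fun v x => sphereWeight v * x) fun v => measurable_const_mul _)
    (fun v => (hmeas v).const_mul _) fun v (_ : v ∈ ballW d (r + 1)) => hweighted v
  have hsphAvg : sphAvg d Y (r + 1) = ∑ v ∈ ballW d (r + 1), fun ω => sphereWeight v * Y v ω := by
    ext ω
    rw [sphAvg_eq_sum_ballW Y hd0, Finset.sum_apply]
  rw [hsphAvg]
  refine hsum.mono ?_
  rw [← Finset.mul_sum]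
  exact mul_le_mul_of_nonneg_left (sum_ballW_sphereWeight_sq_le hd _) hC

theorem free_limit_exponential_tail_general {Ω : Type*} {mΩ : MeasurableSpace Ω} {P : Measure Ω}
    {d : ℕ} (hd : 2 ≤ d) {ν : Measure ℝ} (hmean : ∫ x, x ∂ν = 0)
    {R : ℝ} (hR : Set.Ioo (-R) R ⊆ integrableExpSet id ν)
    {Y : Vertex d → Ω → ℝ} (hindep : iIndepFun Y P) (hlaw : ∀ v, HasLaw (Y v) ν P)
    {H : Ω → ℝ} (hH : ∀ᵐ ω ∂P, Tendsto (fun r => sphAvg d Y r ω) atTop (𝓝 (H ω)))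
    {A : ℝ} (hA : 0 ≤ A) (hAR : A < ((d : ℝ) + 1) * R) :
    ∃ B : ℝ, 0 ≤ B ∧ ∀ s : ℝ,
      P {ω | s ≤ |H ω|} ≤ ENNReal.ofReal (B * Real.exp (-A * s)) := by
  have : IsProbabilityMeasure P := hindep.isProbabilityMeasure
  have : IsProbabilityMeasure ν := (hlaw (0, [])).isProbabilityMeasure_iff.1 this
  have ha : 0 ≤ A / ((d : ℝ) + 1) := by positivity
  obtain ⟨C, hC, hν⟩ := exists_hasSubexponentialMGF_of_integral_eq_zero hmean hR ha
    ((div_lt_iff₀' (by positivity)).2 hAR)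
  have hsphAvg (r : ℕ) : HasSubexponentialMGF (sphAvg d Y (r + 1)) (C * 2) A P := by
    rw [← mul_div_cancel₀ A (by positivity : (d : ℝ) + 1 ≠ 0)]
    exact hasSubexponentialMGF_sphAvg hd (fun v => (hlaw v).aemeasurable) hindep hC ha
      (fun v => hν.of_hasLaw (hlaw v)) r
  have hlimit : HasSubexponentialMGF H (C * 2) A P :=
    .of_tendsto_ae hsphAvg (hH.mono fun ω hω => hω.comp (tendsto_add_atTop_nat 1))
  refine ⟨2 * Real.exp (C * 2 * A ^ 2), by positivity, fun s => ?_⟩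
  rw [← ofReal_measureReal]
  exact ENNReal.ofReal_le_ofReal (hlimit.measureReal_abs_ge_le hA s)

section LatticeLaw

variable {p : ℤ → ℝ}

/-- The measure on `ℝ` carried by `ℤ` with mass function `p`. -/
def latticeLaw (p : ℤ → ℝ) : Measure ℝ :=
  Measure.sum fun j : ℤ => ENNReal.ofReal (p j) • Measure.dirac (j : ℝ)

theorem hasLaw_latticeLaw {Ω : Type*} {mΩ : MeasurableSpace Ω} {P : Measure Ω} {X : Ω → ℤ}
    (hX : Measurable X) (hlaw : ∀ j : ℤ, P {ω | X ω = j} = ENNReal.ofReal (p j)) :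
    HasLaw (fun ω => (X ω : ℝ)) (latticeLaw p) P where
  aemeasurable := by fun_prop
  map_eq := by
    have hatom (j : ℤ) : P.map X {j} = ENNReal.ofReal (p j) := by
      rw [Measure.map_apply hX (measurableSet_singleton j), ← hlaw j]
      rfl
    change P.map ((fun j : ℤ => (j : ℝ)) ∘ X) = _
    rw [← Measure.map_map (g := fun j : ℤ => (j : ℝ)) .of_discrete hX,
      ← Measure.sum_smul_dirac (P.map X), Measure.map_sum AEMeasurable.of_discrete]
    simp only [hatom, Measure.map_smul, Measure.map_dirac' Measurable.of_discrete, latticeLaw]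

theorem mem_integrableExpSet_latticeLaw (hp : ∀ j, 0 ≤ p j) {s : ℝ}
    (hs : Summable fun j : ℤ => Real.exp (s * j) * p j) :
    s ∈ integrableExpSet id (latticeLaw p) := by
  refine integrable_sum_dirac (fun j => ENNReal.ofReal_ne_top) ?_
  simpa only [ENNReal.toReal_ofReal (hp _), Real.norm_eq_abs, Real.abs_exp, id_eq, mul_comm (p _)]
    using hs

theorem integral_latticeLaw_eq_zero_of_even (hp : Function.Even p) :
    ∫ x, x ∂latticeLaw p = 0 := by
  rw [latticeLaw, integral_sum_dirac fun j => ENNReal.ofReal_ne_top, ← self_eq_neg, ← tsum_neg,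
    ← (Equiv.neg ℤ).tsum_eq]
  simp only [Equiv.neg_apply, hp _, Int.cast_neg, smul_neg]

end LatticeLaw

/-- Exponential tail bound for the a.s. limit `H` of the spherical averages
of the free height field: for every `0 < A < (d+1)R` there is `B < ∞` with
`P(|H| ≥ s) ≤ B e^{-As}` for all `s ≥ 0`. -/
theorem free_limit_exponential_tail
    {Ω : Type} [MeasurableSpace Ω] (P : Measure Ω) [IsProbabilityMeasure P]
    (d : ℕ) (hd : 2 ≤ d)
    (p : ℤ → ℝ) (hp0 : ∀ j, 0 ≤ p j) (hpsum : Summable p) (hp1 : ∑' j, p j = 1)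
    (hsymm : ∀ j, p (-j) = p j)
    (R : ℝ) (hR : 0 < R)
    (hψ : ∀ s : ℝ, |s| < R → Summable (fun j : ℤ => Real.exp (s * j) * p j))
    (Y : Vertex d → Ω → ℤ) (hmeas : ∀ v, Measurable (Y v))
    (hindep : iIndepFun Y P)
    (hlaw : ∀ v (j : ℤ), P {ω | Y v ω = j} = ENNReal.ofReal (p j))
    (H : Ω → ℝ) (hHmeas : Measurable H)
    (hH : ∀ᵐ ω ∂P, Tendsto (fun r => sphAvg d (fun v ω => (Y v ω : ℝ)) r ω) atTop (𝓝 (H ω))) :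
    ∀ A : ℝ, 0 < A → A < ((d : ℝ) + 1) * R →
      ∃ B : ℝ, 0 ≤ B ∧ ∀ s : ℝ, 0 ≤ s →
        P {ω | s ≤ |H ω|} ≤ ENNReal.ofReal (B * Real.exp (-A * s)) :=  by
  intro A hA hAR
  obtain ⟨B, hB, htail⟩ := free_limit_exponential_tail_general hd
    (integral_latticeLaw_eq_zero_of_even hsymm)
    (fun s hs => mem_integrableExpSet_latticeLaw hp0 (hψ s (abs_lt.2 hs)))
    (hindep.comp (fun _ (j : ℤ) => (j : ℝ)) fun _ => .of_discrete)
    (fun v => hasLaw_latticeLaw (hmeas v) (hlaw v)) hH hA.le hAR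
  exact ⟨B, hB, fun s _ => htail s⟩
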